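/- arXiv:1907.03439 — 2 statements merged into one kernel-verified Lean document; each statement's English description precedes it below -/
import Mathlib

section
/- Let A = (A_1,…,A_n) be a nonnegative vector in ℝ^n, D = n + A_1 + ⋯ + A_n, and α > 0. The function φ_α(x) = exp(−C_A(α)|x|^α), with C_A(α) = ( (Γ(D/α + 1)/Γ(D/2 + 1)) · Π(A)^{D/2} )^{α/D}, satisfies ∫_{ℝ^n_A} φ_α x^A dx = 1, ∫_{ℝ^n_A} φ_α |x|^α x^A dx = D/(α C_A(α)), and attains equality in the weighted Shannon inequality: −∫_{ℝ^n_A} φ_α log(φ_α) x^A dx = (D/α) · log( (α C_A(α) e / D) ∫_{ℝ^n_A} φ_α |x|^α x^A dx ). -/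
open MeasureTheory Real Filter

noncomputable section

/-- The positivity region `ℝ^n_A = {x : x_i > 0 whenever A_i > 0}`. -/
def monSet {ι : Type*} [Fintype ι] (A : ι → ℝ) : Set (EuclideanSpace ℝ ι) :=
  {x | ∀ i, 0 < A i → 0 < x i}

/-- The monomial weight `x^A = ∏ |x_i|^{A_i}`. -/
def monWeight {ι : Type*} [Fintype ι] (A : ι → ℝ) (x : EuclideanSpace ℝ ι) : ℝ :=
  ∏ i, |x i| ^ A i

/-- The homogeneous dimension `D = n + A_1 + ⋯ + A_n`. -/
def monDim {ι : Type*} [Fintype ι] (A : ι → ℝ) : ℝ :=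
  (Fintype.card ι : ℝ) + ∑ i, A i

/-- `k = #{i : A_i > 0}`. -/
def monK {ι : Type*} [Fintype ι] (A : ι → ℝ) : ℕ :=
  Nat.card {i : ι // 0 < A i}

/-- `Π(A) = [ (∏ Γ((A_i+1)/2)) / 2^k ]^{2/D}`. -/
def monPi {ι : Type*} [Fintype ι] (A : ι → ℝ) : ℝ :=
  ((∏ i, Gamma ((A i + 1) / 2)) / 2 ^ monK A) ^ (2 / monDim A)

/-- The constant `C_A(α) = ( (Γ(D/α+1)/Γ(D/2+1)) Π(A)^{D/2} )^{α/D}`. -/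
def monCA {ι : Type*} [Fintype ι] (A : ι → ℝ) (α : ℝ) : ℝ :=
  (Gamma (monDim A / α + 1) / Gamma (monDim A / 2 + 1) * monPi A ^ (monDim A / 2)) ^
    (α / monDim A)

/-- Integration in polar coordinates of a radial function times a positively homogeneous one. -/
theorem integral_fun_norm_mul_homogeneous {E : Type*} [NormedAddCommGroup E] [NormedSpace ℝ E]
    [FiniteDimensional ℝ E] [Nontrivial E] [MeasurableSpace E] [BorelSpace E] (μ : Measure E)
    [μ.IsAddHaarMeasure] {f : E → ℝ} {s : ℝ}
    (hf : ∀ (r : ℝ) (x : E), 0 < r → f (r • x) = r ^ s * f x) (g : ℝ → ℝ) :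
    ∫ x, g ‖x‖ * f x ∂μ =
      (∫ x, f x.1 ∂μ.toSphere) *
        ∫ r in Set.Ioi (0 : ℝ), r ^ (Module.finrank ℝ E + s - 1) * g r := by
  calc
    ∫ x, g ‖x‖ * f x ∂μ
      = ∫ x : ({(0)}ᶜ : Set E), g ‖x.1‖ * f x.1 ∂(μ.comap (↑)) := by
        rw [integral_subtype_comap (measurableSet_singleton _).compl fun x ↦ g ‖x‖ * f x,
          restrict_compl_singleton]
    _ = ∫ x, f x.1.1 * (x.2.1 ^ s * g x.2.1)
          ∂μ.toSphere.prod (.volumeIoiPow (Module.finrank ℝ E - 1)) := by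
        rw [← μ.measurePreserving_homeomorphUnitSphereProd.integral_comp
          (Homeomorph.measurableEmbedding _)]
        refine integral_congr_ae (.of_forall fun x => ?_)
        have hx : 0 < ‖x.1‖ := norm_pos_iff.2 x.2
        have h : f x.1 = ‖x.1‖ ^ s * f (‖x.1‖⁻¹ • x.1) := by
          rw [← hf _ _ hx, smul_inv_smul₀ hx.ne']
        simp only [homeomorphUnitSphereProd_apply_fst_coe, homeomorphUnitSphereProd_apply_snd_coe]
        rw [h]
        ring
    _ = (∫ x, f x.1 ∂μ.toSphere) *
          ∫ r : Set.Ioi (0 : ℝ), r.1 ^ s * g r.1 ∂.volumeIoiPow (Module.finrank ℝ E - 1) :=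
        integral_prod_mul (fun x : Metric.sphere (0 : E) 1 => f x.1)
          (fun r : Set.Ioi (0 : ℝ) => r.1 ^ s * g r.1)
    _ = _ := by
        congr 1
        simp only [Measure.volumeIoiPow, ENNReal.ofReal]
        rw [integral_withDensity_eq_integral_smul,
          integral_subtype_comap measurableSet_Ioi
            fun a ↦ Real.toNNReal (a ^ (Module.finrank ℝ E - 1)) • (a ^ s * g a),
          setIntegral_congr_fun measurableSet_Ioi fun x hx ↦ ?_]
        · have hx : 0 < x := hx
          rw [NNReal.smul_def, Real.coe_toNNReal _ (pow_nonneg hx.le _), smul_eq_mul, ← mul_assoc,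
            ← rpow_natCast, ← rpow_add hx, Nat.cast_sub Module.finrank_pos]
          congr 2
          push_cast
          ring
        · exact (measurable_subtype_coe.pow_const _).real_toNNReal

theorem measurableSet_monSet {ι : Type*} [Fintype ι] (A : ι → ℝ) : MeasurableSet (monSet A) := by
  simp only [monSet, Set.ofPred_forall]
  refine .iInter fun i => .iInter fun _ => measurableSet_lt measurable_const ?_
  fun_prop

theorem monDim_pos {ι : Type*} [Fintype ι] [Nonempty ι] {A : ι → ℝ} (hA : ∀ i, 0 ≤ A i) :
    0 < monDim A :=
  add_pos_of_pos_of_nonneg (Nat.cast_pos.2 Fintype.card_pos) (Finset.sum_nonneg fun i _ => hA i)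

theorem indicator_monSet_smul {ι : Type*} [Fintype ι] (A : ι → ℝ) {r : ℝ} (hr : 0 < r)
    (x : EuclideanSpace ℝ ι) :
    (monSet A).indicator (monWeight A) (r • x) =
      r ^ (∑ i, A i) * (monSet A).indicator (monWeight A) x := by
  have hmem : r • x ∈ monSet A ↔ x ∈ monSet A := by simp [monSet, hr]
  by_cases hx : x ∈ monSet A
  · rw [Set.indicator_of_mem (hmem.2 hx), Set.indicator_of_mem hx]
    simp only [monWeight, PiLp.smul_apply, smul_eq_mul, abs_mul, abs_of_pos hr]
    rw [rpow_sum_of_pos hr, ← Finset.prod_mul_distrib]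
    exact Finset.prod_congr rfl fun i _ => mul_rpow hr.le (abs_nonneg _)
  · rw [Set.indicator_of_notMem (mt hmem.1 hx), Set.indicator_of_notMem hx, mul_zero]

/-- Polar coordinates for radial functions against the monomial weight. -/
theorem exists_setIntegral_monSet_eq {ι : Type*} [Fintype ι] [Nonempty ι] (A : ι → ℝ) :
    ∃ S : ℝ, ∀ g : ℝ → ℝ, ∫ x in monSet A, g ‖x‖ * monWeight A x =
      S * ∫ r in Set.Ioi (0 : ℝ), r ^ (monDim A - 1) * g r := by
  refine ⟨∫ x, (monSet A).indicator (monWeight A) x.1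
    ∂(volume : Measure (EuclideanSpace ℝ ι)).toSphere, fun g => ?_⟩
  rw [← integral_indicator (measurableSet_monSet A)]
  simp_rw [Set.indicator_mul_right]
  rw [integral_fun_norm_mul_homogeneous volume
    (fun r x hr => indicator_monSet_smul A hr x) g, finrank_euclideanSpace]
  rfl

theorem integral_monomial_mul_exp_neg_sq {a : ℝ} (ha : 0 ≤ a) :
    ∫ t : ℝ, {t : ℝ | 0 < a → 0 < t}.indicator (fun t => exp (-t ^ 2) * |t| ^ a) t =
      Gamma ((a + 1) / 2) / if 0 < a then 2 else 1 := by
  rcases ha.eq_or_lt with rfl | ha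
  · simpa [← Gamma_one_half_eq] using integral_gaussian 1
  · have h := integral_rpow_mul_exp_neg_rpow (p := 2) (q := a) two_pos (by linarith)
    have hs : {t : ℝ | 0 < a → 0 < t} = Set.Ioi 0 := by ext t; simp [ha]
    rw [hs, integral_indicator measurableSet_Ioi, if_pos ha, div_eq_inv_mul, ← one_div, ← h]
    refine setIntegral_congr_fun measurableSet_Ioi fun t ht => ?_
    have ht : 0 < t := ht
    simp only [abs_of_pos ht, rpow_two]
    ring

theorem setIntegral_monSet_exp_neg_sq {ι : Type*} [Fintype ι] {A : ι → ℝ} (hA : ∀ i, 0 ≤ A i) :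
    ∫ x in monSet A, exp (-‖x‖ ^ 2) * monWeight A x =
      (∏ i, Gamma ((A i + 1) / 2)) / 2 ^ monK A := by
  classical
  have hk : ∏ i, (if 0 < A i then (2 : ℝ) else 1) = 2 ^ monK A := by
    rw [Finset.prod_ite, Finset.prod_const, Finset.prod_const_one, mul_one, monK,
      Nat.card_eq_fintype_card, Fintype.card_subtype]
  rw [← hk, ← Finset.prod_div_distrib, ← integral_indicator (measurableSet_monSet A)]
  simp_rw [← fun i => integral_monomial_mul_exp_neg_sq (hA i)]
  rw [← integral_fintype_prod_volume_eq_prod,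
    ← (PiLp.volume_preserving_ofLp ι).integral_comp
      (MeasurableEquiv.toLp 2 (ι → ℝ)).symm.measurableEmbedding]
  refine integral_congr_ae (.of_forall fun x => ?_)
  by_cases hx : x ∈ monSet A
  · simp only [Set.indicator_of_mem hx]
    rw [Finset.prod_congr rfl fun i _ =>
      Set.indicator_of_mem (show x i ∈ {t : ℝ | 0 < A i → 0 < t} from hx i) _, Finset.prod_mul_distrib,
      ← exp_sum, Finset.sum_neg_distrib, EuclideanSpace.real_norm_sq_eq, monWeight]
  · simp only [Set.indicator_of_notMem hx]
    obtain ⟨i, hi⟩ := not_forall.1 hx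
    exact (Finset.prod_eq_zero (Finset.mem_univ i)
      (Set.indicator_of_notMem (show x i ∉ {t : ℝ | 0 < A i → 0 < t} from hi) _)).symm

theorem gaussian_monomial_pos {ι : Type*} [Fintype ι] {A : ι → ℝ} (hA : ∀ i, 0 ≤ A i) :
    0 < (∏ i, Gamma ((A i + 1) / 2)) / 2 ^ monK A :=
  div_pos (Finset.prod_pos fun i _ => Gamma_pos_of_pos (by have := hA i; positivity))
    (by positivity)

/-- Polar coordinates for the monomial weight, with the surface constant identified by
comparison with the Gaussian integral. -/
theorem setIntegral_monSet_radial {ι : Type*} [Fintype ι] [Nonempty ι] {A : ι → ℝ}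
    (hA : ∀ i, 0 ≤ A i) (g : ℝ → ℝ) :
    ∫ x in monSet A, g ‖x‖ * monWeight A x =
      monPi A ^ (monDim A / 2) * monDim A / Gamma (monDim A / 2 + 1) *
        ∫ r in Set.Ioi (0 : ℝ), r ^ (monDim A - 1) * g r := by
  obtain ⟨S, hS⟩ := exists_setIntegral_monSet_eq A
  have hD := monDim_pos hA
  have hG : 0 < Gamma (monDim A / 2) := Gamma_pos_of_pos (by positivity)
  have hP : monPi A ^ (monDim A / 2) = (∏ i, Gamma ((A i + 1) / 2)) / 2 ^ monK A := by
    rw [monPi, ← rpow_mul (gaussian_monomial_pos hA).le,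
      div_mul_div_cancel₀ hD.ne', div_self two_ne_zero, rpow_one]
  have h := hS fun r => exp (-r ^ 2)
  have h2 := integral_rpow_mul_exp_neg_rpow (p := 2) (q := monDim A - 1) two_pos (by linarith)
  simp only [rpow_two, sub_add_cancel] at h2
  rw [setIntegral_monSet_exp_neg_sq hA, ← hP, h2] at h
  rw [hS, h, Gamma_add_one (by positivity)]
  congr 1
  field_simp

theorem monCA_pos {ι : Type*} [Fintype ι] [Nonempty ι] {A : ι → ℝ} (hA : ∀ i, 0 ≤ A i)
    {α : ℝ} (hα : 0 < α) : 0 < monCA A α := by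
  have hD := monDim_pos hA
  have hP : 0 < monPi A := rpow_pos_of_pos (gaussian_monomial_pos hA) _
  have h1 : 0 < Gamma (monDim A / α + 1) := Gamma_pos_of_pos (by positivity)
  have h2 : 0 < Gamma (monDim A / 2 + 1) := Gamma_pos_of_pos (by positivity)
  unfold monCA
  positivity

theorem monCA_rpow {ι : Type*} [Fintype ι] [Nonempty ι] {A : ι → ℝ} (hA : ∀ i, 0 ≤ A i)
    {α : ℝ} (hα : 0 < α) :
    monCA A α ^ (monDim A / α) =
      Gamma (monDim A / α + 1) / Gamma (monDim A / 2 + 1) * monPi A ^ (monDim A / 2) := by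
  have hD := monDim_pos hA
  have hP : 0 < monPi A := rpow_pos_of_pos (gaussian_monomial_pos hA) _
  have h1 : 0 < Gamma (monDim A / α + 1) := Gamma_pos_of_pos (by positivity)
  have h2 : 0 < Gamma (monDim A / 2 + 1) := Gamma_pos_of_pos (by positivity)
  rw [monCA, ← rpow_mul (by positivity), div_mul_div_cancel₀ hD.ne', div_self hα.ne', rpow_one]

theorem setIntegral_exp_neg_monCA {ι : Type*} [Fintype ι] [Nonempty ι] {A : ι → ℝ}
    (hA : ∀ i, 0 ≤ A i) {α : ℝ} (hα : 0 < α) :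
    ∫ x in monSet A, exp (-(monCA A α * ‖x‖ ^ α)) * monWeight A x = 1 := by
  have hD := monDim_pos hA
  have hC := monCA_pos hA hα
  have hP : 0 < monPi A := rpow_pos_of_pos (gaussian_monomial_pos hA) _
  have h1 : 0 < Gamma (monDim A / α) := Gamma_pos_of_pos (by positivity)
  have h2 : 0 < Gamma (monDim A / 2 + 1) := Gamma_pos_of_pos (by positivity)
  have h := integral_rpow_mul_exp_neg_mul_rpow hα (q := monDim A - 1) (by linarith) hC
  simp only [neg_mul, sub_add_cancel] at h
  rw [setIntegral_monSet_radial hA fun r => exp (-(monCA A α * r ^ α)), h, neg_div,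
    rpow_neg hC.le, monCA_rpow hA hα, Gamma_add_one (s := monDim A / α) (by positivity)]
  have hP' : 0 < monPi A ^ (monDim A / 2) := by positivity
  field_simp

theorem setIntegral_exp_neg_monCA_mul_norm_rpow {ι : Type*} [Fintype ι] [Nonempty ι] {A : ι → ℝ}
    (hA : ∀ i, 0 ≤ A i) {α : ℝ} (hα : 0 < α) :
    ∫ x in monSet A, exp (-(monCA A α * ‖x‖ ^ α)) * ‖x‖ ^ α * monWeight A x =
      monDim A / (α * monCA A α) := by
  have hD := monDim_pos hA
  have hC := monCA_pos hA hα
  have hP : 0 < monPi A := rpow_pos_of_pos (gaussian_monomial_pos hA) _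
  have h2 : 0 < Gamma (monDim A / 2 + 1) := Gamma_pos_of_pos (by positivity)
  have h := integral_rpow_mul_exp_neg_mul_rpow hα (q := monDim A - 1 + α) (by linarith) hC
  have he : monDim A - 1 + α + 1 = monDim A + α := by ring
  have hi : ∫ r in Set.Ioi (0 : ℝ), r ^ (monDim A - 1) * (exp (-(monCA A α * r ^ α)) * r ^ α) =
      ∫ r in Set.Ioi (0 : ℝ), r ^ (monDim A - 1 + α) * exp (-monCA A α * r ^ α) := by
    refine setIntegral_congr_fun measurableSet_Ioi fun r hr => ?_
    simp only [rpow_add hr, neg_mul]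
    ring
  rw [setIntegral_monSet_radial hA fun r => exp (-(monCA A α * r ^ α)) * r ^ α, hi, h, he, neg_div,
    rpow_neg hC.le, add_div, div_self hα.ne', rpow_add hC, rpow_one, monCA_rpow hA hα]
  have h3 : 0 < Gamma (monDim A / α + 1) := Gamma_pos_of_pos (by positivity)
  have hP' : 0 < monPi A ^ (monDim A / 2) := by positivity
  field_simp

/-- the function `φ_α(x) = exp(-C_A(α)|x|^α)` is normalized, has `α`-moment
`D/(α C_A(α))`, and attains equality in the weighted Shannon inequality. -/
theorem extremal_shannon_monomial_weight {n : ℕ} (hn : 0 < n) (A : Fin n → ℝ)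
    (hA : ∀ i, 0 ≤ A i) (α : ℝ) (hα : 0 < α)
    (φ : EuclideanSpace ℝ (Fin n) → ℝ)
    (hφ : φ = fun x => exp (-(monCA A α * ‖x‖ ^ α))) :
    (∫ x in monSet A, φ x * monWeight A x) = 1 ∧
    (∫ x in monSet A, φ x * ‖x‖ ^ α * monWeight A x) = monDim A / (α * monCA A α) ∧
    -∫ x in monSet A, φ x * log (φ x) * monWeight A x =
      monDim A / α *
        log (α * monCA A α * exp 1 / monDim A *
          ∫ x in monSet A, φ x * ‖x‖ ^ α * monWeight A x) := by
  have : Nonempty (Fin n) := ⟨⟨0, hn⟩⟩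
  have hD := monDim_pos hA
  have hC := monCA_pos hA hα
  subst hφ
  have hmom := setIntegral_exp_neg_monCA_mul_norm_rpow hA hα
  refine ⟨setIntegral_exp_neg_monCA hA hα, hmom, ?_⟩
  have hent : ∀ x : EuclideanSpace ℝ (Fin n),
      exp (-(monCA A α * ‖x‖ ^ α)) * log (exp (-(monCA A α * ‖x‖ ^ α))) * monWeight A x =
        -monCA A α * (exp (-(monCA A α * ‖x‖ ^ α)) * ‖x‖ ^ α * monWeight A x) := fun x => by
    rw [log_exp]
    ring
  have harg : α * monCA A α * exp 1 / monDim A * (monDim A / (α * monCA A α)) = exp 1 := by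
    field_simp
  simp only [hent]
  rw [integral_const_mul, hmom, harg, log_exp]
  field_simp
end
end

section
/- Let A = (A_1,…,A_n) be a nonnegative vector in ℝ^n and D = n + A_1 + ⋯ + A_n. Then for every continuously differentiable function f : ℝ^n → ℝ with compact support satisfying ∫_{ℝ^n_A} |f|^2 x^A dx = 1, one has D^2/4 ≤ ( ∫_{ℝ^n_A} |f|^2 |x|^2 x^A dx ) · ( ∫_{ℝ^n_A} |∇f|^2 x^A dx ). -/
open MeasureTheory Real Filter

noncomputable section

open scoped Pointwise in
theorem smul_monSet {ι : Type*} [Fintype ι] (A : ι → ℝ) {t : ℝ} (ht : 0 < t) :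
    t • monSet A = monSet A := by
  ext x
  rw [Set.mem_smul_set_iff_inv_smul_mem₀ ht.ne']
  simp [monSet, ht]

theorem monWeight_smul {ι : Type*} [Fintype ι] (A : ι → ℝ) {t : ℝ} (ht : 0 < t)
    (x : EuclideanSpace ℝ ι) : monWeight A (t • x) = t ^ (∑ i, A i) * monWeight A x := by
  simp only [monWeight, PiLp.smul_apply, smul_eq_mul, abs_mul, abs_of_pos ht]
  rw [Real.rpow_sum_of_pos ht, ← Finset.prod_mul_distrib]
  exact Finset.prod_congr rfl fun i _ => Real.mul_rpow ht.le (abs_nonneg _)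

theorem monWeight_nonneg {ι : Type*} [Fintype ι] (A : ι → ℝ) (x : EuclideanSpace ℝ ι) :
    0 ≤ monWeight A x :=
  Finset.prod_nonneg fun _ _ => Real.rpow_nonneg (abs_nonneg _) _

theorem continuous_monWeight {ι : Type*} [Fintype ι] {A : ι → ℝ} (hA : ∀ i, 0 ≤ A i) :
    Continuous (monWeight A) := by
  unfold monWeight
  refine continuous_finsetProd _ fun i _ => ?_
  exact Continuous.rpow_const (by fun_prop) fun _ => Or.inr (hA i)

theorem setIntegral_monWeight_comp_smul {ι : Type*} [Fintype ι] (A : ι → ℝ)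
    (g : EuclideanSpace ℝ ι → ℝ) {t : ℝ} (ht : 0 < t) :
    ∫ x in monSet A, g (t • x) * monWeight A x =
      t ^ (-monDim A) * ∫ x in monSet A, g x * monWeight A x := by
  have h := Measure.setIntegral_comp_smul_of_pos (volume : Measure (EuclideanSpace ℝ ι))
    (fun x => g x * monWeight A x) (monSet A) ht
  simp only [smul_monSet A ht, monWeight_smul A ht, finrank_euclideanSpace, smul_eq_mul] at h
  have h2 : ∀ x, g (t • x) * (t ^ (∑ i, A i) * monWeight A x) =
      t ^ (∑ i, A i) * (g (t • x) * monWeight A x) := fun x => by ring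
  simp only [h2, integral_const_mul] at h
  have hp := Real.rpow_pos_of_pos ht (∑ i, A i)
  rw [monDim, neg_add, Real.rpow_add ht, Real.rpow_neg ht.le, Real.rpow_neg ht.le,
    Real.rpow_natCast]
  field_simp at h ⊢
  linarith

/-- Euler's identity for the weight `x^A`: the divergence of `x^A x` is `D x^A`. -/
theorem setIntegral_fderiv_apply_self_monWeight {ι : Type*} [Fintype ι] {A : ι → ℝ}
    (hA : ∀ i, 0 ≤ A i) {g : EuclideanSpace ℝ ι → ℝ} (hg : ContDiff ℝ 1 g)
    (hsupp : HasCompactSupport g) :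
    ∫ x in monSet A, fderiv ℝ g x x * monWeight A x =
      -monDim A * ∫ x in monSet A, g x * monWeight A x := by
  have hw := continuous_monWeight hA
  have hgd : Continuous (fderiv ℝ g) := hg.continuous_fderiv one_ne_zero
  have hsupp' : HasCompactSupport fun x => fderiv ℝ g x x :=
    (hsupp.fderiv ℝ).mono' fun x hx => subset_closure fun h => hx (by simp [h])
  obtain ⟨C, hC⟩ := hsupp'.exists_bound_of_continuous (by fun_prop)
  obtain ⟨R, hR⟩ := hsupp'.isCompact.isBounded.subset_closedBall 0
  have hC0 : 0 ≤ C := (norm_nonneg _).trans (hC 0)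
  have hderiv : ∀ x, ∀ t ∈ Set.Ioo (1 / 2 : ℝ) 2,
      HasDerivAt (fun s : ℝ => g (s • x) * monWeight A x)
        (fderiv ℝ g (t • x) x * monWeight A x) t := by
    intro x t _
    have h1 : HasDerivAt (fun s : ℝ => s • x) x t := by
      simpa using (hasDerivAt_id t).smul_const x
    exact (((hg.differentiable one_ne_zero (t • x)).hasFDerivAt).comp_hasDerivAt t h1).mul_const _
  have hbound : ∀ x, ∀ t ∈ Set.Ioo (1 / 2 : ℝ) 2,
      ‖fderiv ℝ g (t • x) x * monWeight A x‖ ≤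
        (Metric.closedBall 0 (2 * R)).indicator (fun x => 2 * C * monWeight A x) x := by
    rintro x t ⟨ht, -⟩
    have ht0 : 0 < t := by linarith
    have hx : fderiv ℝ g (t • x) x = t⁻¹ * fderiv ℝ g (t • x) (t • x) := by
      rw [map_smul, smul_eq_mul, inv_mul_cancel_left₀ ht0.ne']
    by_cases hxb : x ∈ Metric.closedBall (0 : EuclideanSpace ℝ ι) (2 * R)
    · rw [Set.indicator_of_mem hxb, norm_mul, Real.norm_of_nonneg (monWeight_nonneg A x), hx,
        norm_mul, Real.norm_of_nonneg (inv_nonneg.2 ht0.le)]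
      have hinv : t⁻¹ ≤ 2 := by
        rw [inv_le_comm₀ ht0 two_pos]; linarith
      exact mul_le_mul_of_nonneg_right
        (mul_le_mul hinv (hC _) (norm_nonneg _) two_pos.le) (monWeight_nonneg A x)
    · rw [Set.indicator_of_notMem hxb, hx]
      have hz : fderiv ℝ g (t • x) (t • x) = 0 := by
        refine image_eq_zero_of_notMem_tsupport (f := fun x => fderiv ℝ g x x) fun hmem => hxb ?_
        have := hR hmem
        rw [mem_closedBall_zero_iff, norm_smul, Real.norm_of_nonneg ht0.le] at this
        rw [mem_closedBall_zero_iff]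
        nlinarith [norm_nonneg x]
      simp [hz]
  have hmain := (hasDerivAt_integral_of_dominated_loc_of_deriv_le
    (μ := volume.restrict (monSet A)) (x₀ := (1 : ℝ))
    (F := fun t x => g (t • x) * monWeight A x)
    (F' := fun t x => fderiv ℝ g (t • x) x * monWeight A x)
    (Ioo_mem_nhds (by norm_num) (by norm_num))
    (Eventually.of_forall fun t => by
      have := hg.continuous
      exact Continuous.aestronglyMeasurable (by fun_prop))
    (by
      have := hg.continuous
      simp only [one_smul]
      exact (Continuous.integrable_of_hasCompactSupport (by fun_prop)
        (hsupp.mul_right (f' := monWeight A))).restrict)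
    (Continuous.aestronglyMeasurable (by fun_prop))
    (Eventually.of_forall hbound)
    (((Continuous.continuousOn (by fun_prop)).integrableOn_compact
      (isCompact_closedBall _ _)).integrable_indicator measurableSet_closedBall).restrict
    (Eventually.of_forall hderiv)).2
  simp only [one_smul] at hmain
  have hpow := (Real.hasDerivAt_rpow_const (x := 1) (p := -monDim A)
    (Or.inl one_ne_zero)).mul_const (∫ x in monSet A, g x * monWeight A x)
  rw [Real.one_rpow, mul_one] at hpow
  refine hmain.unique (hpow.congr_of_eventuallyEq ?_)
  filter_upwards [lt_mem_nhds one_pos] with t ht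
  exact setIntegral_monWeight_comp_smul A g ht

/-- Heisenberg's uncertainty principle type inequality with monomial weights. -/
theorem heisenberg_monomial_weight {n : ℕ} (hn : 0 < n) (A : Fin n → ℝ) (hA : ∀ i, 0 ≤ A i)
    (f : EuclideanSpace ℝ (Fin n) → ℝ) (hf : ContDiff ℝ 1 f) (hsupp : HasCompactSupport f)
    (hnorm : ∫ x in monSet A, f x ^ 2 * monWeight A x = 1) :
    monDim A ^ 2 / 4 ≤
      (∫ x in monSet A, f x ^ 2 * ‖x‖ ^ 2 * monWeight A x) *
        ∫ x in monSet A, ‖fderiv ℝ f x‖ ^ 2 * monWeight A x := by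
  have hw := continuous_monWeight hA
  have hfc := hf.continuous
  have hfd : Continuous (fderiv ℝ f) := hf.continuous_fderiv one_ne_zero
  have heuler := setIntegral_fderiv_apply_self_monWeight hA (hf.pow 2)
    (hsupp.comp_left (g := fun y : ℝ => y ^ 2) (by norm_num))
  have hsq : ∀ x, fderiv ℝ (fun y => f y ^ 2) x x * monWeight A x =
      2 * (f x * fderiv ℝ f x x * monWeight A x) := fun x => by
    have h := ((hf.differentiable one_ne_zero x).hasFDerivAt.pow 2).fderiv
    rw [h]
    simp
    ring
  simp only [hsq, integral_const_mul] at heuler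
  rw [hnorm] at heuler
  have hi1 : IntegrableOn (fun x => f x ^ 2 * ‖x‖ ^ 2 * monWeight A x) (monSet A) :=
    (Continuous.integrable_of_hasCompactSupport (by fun_prop)
      (hsupp.mono fun x hx h => hx (by simp [h]))).restrict
  have hi2 : IntegrableOn (fun x => f x * fderiv ℝ f x x * monWeight A x) (monSet A) :=
    (Continuous.integrable_of_hasCompactSupport (by fun_prop)
      (hsupp.mono fun x hx h => hx (by simp [h]))).restrict
  have hi3 : IntegrableOn (fun x => ‖fderiv ℝ f x‖ ^ 2 * monWeight A x) (monSet A) :=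
    (Continuous.integrable_of_hasCompactSupport (by fun_prop)
      ((hsupp.fderiv ℝ).mono fun x hx h => hx (by simp [h]))).restrict
  have hquad : ∀ s : ℝ, 0 ≤ (∫ x in monSet A, f x ^ 2 * ‖x‖ ^ 2 * monWeight A x) * (s * s) +
      (2 * ∫ x in monSet A, f x * fderiv ℝ f x x * monWeight A x) * s +
      ∫ x in monSet A, ‖fderiv ℝ f x‖ ^ 2 * monWeight A x := by
    intro s
    have hnn : 0 ≤ ∫ x in monSet A, ((s * s) * (f x ^ 2 * ‖x‖ ^ 2 * monWeight A x) +
        (2 * s) * (f x * fderiv ℝ f x x * monWeight A x) +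
        ‖fderiv ℝ f x‖ ^ 2 * monWeight A x) := by
      refine integral_nonneg fun x => ?_
      have hle : |s * f x * fderiv ℝ f x x| ≤ |s * f x| * (‖fderiv ℝ f x‖ * ‖x‖) := by
        rw [abs_mul]
        exact mul_le_mul_of_nonneg_left ((fderiv ℝ f x).le_opNorm x) (abs_nonneg _)
      have hpos : 0 ≤ (s * f x) ^ 2 * ‖x‖ ^ 2 + 2 * (s * f x * fderiv ℝ f x x) +
          ‖fderiv ℝ f x‖ ^ 2 := by
        nlinarith [sq_nonneg (|s * f x| * ‖x‖ - ‖fderiv ℝ f x‖), sq_abs (s * f x),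
          neg_abs_le (s * f x * fderiv ℝ f x x)]
      have := mul_nonneg hpos (monWeight_nonneg A x)
      show 0 ≤ _
      linarith
    have hi12 : IntegrableOn (fun x => (s * s) * (f x ^ 2 * ‖x‖ ^ 2 * monWeight A x) +
        (2 * s) * (f x * fderiv ℝ f x x * monWeight A x)) (monSet A) :=
      (hi1.const_mul _).add (hi2.const_mul _)
    rw [integral_add hi12 hi3, integral_add (hi1.const_mul _) (hi2.const_mul _), integral_const_mul,
      integral_const_mul] at hnn
    linarith
  have hdisc := discrim_le_zero hquad
  rw [discrim, heuler] at hdisc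
  linarith
end
end
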